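/- arXiv:1907.05999 — 2 statements merged into one kernel-verified Lean document; each statement's English description precedes it below -/
import Mathlib

section
/- Let D be a lattice in ℳ(𝔽). Then there exists a τ-stable lattice L in N₀ such that either pL^∨ ⊆ pD^∨ ⊆ D ⊆ L ⊆ L^∨ ⊆ D^∨, or pD^∨ ⊆ pL^∨ ⊆ L ⊆ D ⊆ D^∨ ⊆ L^∨. -/
open Pointwise

noncomputable section

variable (p : ℕ) [Fact p.Prime] (𝔽 : Type) [Field 𝔽] [IsAlgClosed 𝔽] [CharP 𝔽 p]

/-- The Witt ring `W(𝔽)`. -/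
abbrev Wp := WittVector p 𝔽

/-- The fraction field `K` of `W(𝔽)`. -/
abbrev Kp := FractionRing (Wp p 𝔽)

/-- `N₀ = K⁴`. -/
abbrev N0 := Fin 4 → Kp p 𝔽

/-- The symplectic form on `N₀`. -/
def omegaForm (x y : N0 p 𝔽) : Kp p 𝔽 :=
  x 0 * y 3 - x 3 * y 0 + x 1 * y 2 - x 2 * y 1

/-- The dual lattice of a `W`-submodule of `N₀`. -/
def dualL (D : Submodule (Wp p 𝔽) (N0 p 𝔽)) : Submodule (Wp p 𝔽) (N0 p 𝔽) where
  carrier := {x | ∀ d ∈ D, omegaForm p 𝔽 x d ∈ (algebraMap (Wp p 𝔽) (Kp p 𝔽)).range}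
  zero_mem' := by
    intro d hd
    have : omegaForm p 𝔽 0 d = 0 := by simp [omegaForm]
    rw [this]; exact zero_mem _
  add_mem' := by
    intro x y hx hy d hd
    have : omegaForm p 𝔽 (x + y) d = omegaForm p 𝔽 x d + omegaForm p 𝔽 y d := by
      simp [omegaForm]; ring
    rw [this]; exact add_mem (hx d hd) (hy d hd)
  smul_mem' := by
    intro c x hx d hd
    have : omegaForm p 𝔽 (c • x) d
        = algebraMap (Wp p 𝔽) (Kp p 𝔽) c * omegaForm p 𝔽 x d := by
      simp [omegaForm, Algebra.smul_def]; ring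
    rw [this]; exact mul_mem ⟨c, rfl⟩ (hx d hd)

variable (σ : Kp p 𝔽 ≃+* Kp p 𝔽)

/-- The semilinear map `τ` on `N₀`, applying `σ` to each coordinate. -/
def tauFun (x : N0 p 𝔽) : N0 p 𝔽 := fun i => σ (x i)

/-- The lattice `τD` generated by the image of `D` under `τ`. -/
def tauL (D : Submodule (Wp p 𝔽) (N0 p 𝔽)) : Submodule (Wp p 𝔽) (N0 p 𝔽) :=
  Submodule.span (Wp p 𝔽) (tauFun p 𝔽 σ '' D)

/-- `D` is a lattice in `N₀`: finitely generated over `W` and spanning `N₀` over `K`. -/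
def IsLattice (D : Submodule (Wp p 𝔽) (N0 p 𝔽)) : Prop :=
  D.FG ∧ Submodule.span (Kp p 𝔽) (D : Set (N0 p 𝔽)) = ⊤

/-- The length of the `W`-module `B / A` (as the Krull dimension of its submodule
lattice). -/
def relLength (A B : Submodule (Wp p 𝔽) (N0 p 𝔽)) : WithBot ℕ∞ :=
  Order.krullDim (Submodule (Wp p 𝔽) (B ⧸ (A.comap B.subtype)))

/-- `A ⊂ᵈ B` : `A ⊆ B` with colength `d`. -/
def SubD (d : ℕ) (A B : Submodule (Wp p 𝔽) (N0 p 𝔽)) : Prop :=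
  A ≤ B ∧ relLength p 𝔽 A B = (d : WithBot ℕ∞)

/-- Membership in `ℳ(𝔽)`. -/
def memM (D : Submodule (Wp p 𝔽) (N0 p 𝔽)) : Prop :=
  IsLattice p 𝔽 D ∧
  SubD p 𝔽 2 ((p : Wp p 𝔽) • dualL p 𝔽 D) D ∧
  SubD p 𝔽 2 D (dualL p 𝔽 D) ∧
  SubD p 𝔽 2 ((p : Wp p 𝔽) • dualL p 𝔽 D) (tauL p 𝔽 σ D) ∧
  SubD p 𝔽 2 (tauL p 𝔽 σ D) (dualL p 𝔽 D) ∧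
  relLength p 𝔽 D (D ⊔ tauL p 𝔽 σ D) ≤ 1

/-- `σ` is the automorphism of `K` induced by the Witt-vector Frobenius. -/
def IsWittFrobenius : Prop :=
  ∀ w : Wp p 𝔽, σ (algebraMap (Wp p 𝔽) (Kp p 𝔽) w)
    = algebraMap (Wp p 𝔽) (Kp p 𝔽) (WittVector.frobeniusEquiv p 𝔽 w)


section Helpers

set_option linter.unusedSectionVars false

/-- Four-term chains are impossible in an interval of length two. -/
theorem SubD.no_chain {A B : Submodule (Wp p 𝔽) (N0 p 𝔽)} (h : SubD p 𝔽 2 A B)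
    {X Y : Submodule (Wp p 𝔽) (N0 p 𝔽)} (h1 : A < X) (h2 : X < Y) (h3 : Y < B) : False := by
  obtain ⟨hAB, h⟩ := h
  let f : Submodule (Wp p 𝔽) (N0 p 𝔽) → Submodule (Wp p 𝔽) (B ⧸ (A.comap B.subtype)) :=
    fun X => (X.comap B.subtype).map (Submodule.mkQ _)
  have hf : ∀ X Y : Submodule (Wp p 𝔽) (N0 p 𝔽), A ≤ X → Y ≤ B → X < Y → f X < f Y := by
    intro X Y hX hY hXY
    refine lt_of_le_of_ne (Submodule.map_mono (Submodule.comap_mono hXY.le)) ?_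
    intro he
    have he' := congrArg (Submodule.comap (Submodule.mkQ (A.comap B.subtype))) he
    simp only [f, Submodule.comap_map_mkQ] at he'
    rw [sup_eq_right.2 (Submodule.comap_mono hX),
      sup_eq_right.2 (Submodule.comap_mono (hX.trans hXY.le))] at he'
    have he2 := congrArg (Submodule.map B.subtype) he'
    simp only [Submodule.map_comap_subtype] at he2
    rw [inf_eq_right.2 hY, inf_eq_right.2 (hXY.le.trans hY)] at he2
    exact hXY.ne he2
  have g1 := hf A X le_rfl (h2.le.trans h3.le) h1
  have g2 := hf X Y h1.le h3.le h2
  have g3 := hf Y B (h1.le.trans h2.le) le_rfl h3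
  let l : LTSeries (Submodule (Wp p 𝔽) (B ⧸ (A.comap B.subtype))) :=
    { length := 3
      toFun := ![f A, f X, f Y, f B]
      step := by
        intro i
        fin_cases i
        · exact g1
        · exact g2
        · exact g3 }
  have hl := Order.le_krullDim_iff.2 ⟨l, rfl⟩
  unfold relLength at h
  rw [h] at hl
  have : (3 : ℕ) ≤ 2 := by exact_mod_cast hl
  omega

theorem SubD.exists_mid {A B : Submodule (Wp p 𝔽) (N0 p 𝔽)} (h : SubD p 𝔽 2 A B) :
    ∃ X, A < X ∧ X < B := by
  obtain ⟨hAB, h⟩ := h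
  unfold relLength at h
  obtain ⟨l, hl⟩ := Order.le_krullDim_iff.1 h.ge
  have h01 : l ⟨0, by omega⟩ < l ⟨1, by omega⟩ := l.strictMono (Fin.mk_lt_mk.2 (by omega))
  have h12 : l ⟨1, by omega⟩ < l ⟨2, by omega⟩ := l.strictMono (Fin.mk_lt_mk.2 (by omega))
  set m := l ⟨1, by omega⟩
  let g : Submodule (Wp p 𝔽) (B ⧸ (A.comap B.subtype)) → Submodule (Wp p 𝔽) (N0 p 𝔽) :=
    fun m => (m.comap (Submodule.mkQ _)).map B.subtype
  have hg : StrictMono g := by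
    have h1 : StrictMono (Submodule.map B.subtype) :=
      Submodule.map_strictMono_of_injective B.injective_subtype
    have h2 : StrictMono (Submodule.comap (Submodule.mkQ (A.comap B.subtype))) :=
      Submodule.comap_strictMono_of_surjective (Submodule.mkQ_surjective _)
    exact h1.comp h2
  have hbot : g ⊥ = A := by
    simp only [g, Submodule.comap_bot, Submodule.ker_mkQ, Submodule.map_comap_subtype]
    exact inf_eq_right.2 hAB
  have htop : g ⊤ = B := by
    simp [g]
  refine ⟨g m, ?_, ?_⟩
  · rw [← hbot]; exact hg (bot_le.trans_lt h01)
  · exact (hg (h12.trans_le le_top)).trans_eq htop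

/-- The symplectic form as a bilinear form. -/
def omegaB : LinearMap.BilinForm (Kp p 𝔽) (N0 p 𝔽) :=
  LinearMap.mk₂ _ (omegaForm p 𝔽)
    (by intros; simp [omegaForm]; ring) (by intros; simp [omegaForm]; ring)
    (by intros; simp [omegaForm]; ring) (by intros; simp [omegaForm]; ring)

theorem omegaB_apply (x y : N0 p 𝔽) : omegaB p 𝔽 x y = omegaForm p 𝔽 x y := rfl

theorem omega_skew (x y : N0 p 𝔽) : omegaForm p 𝔽 x y = - omegaForm p 𝔽 y x := by
  simp [omegaForm]; ring

theorem omegaB_nondeg : (omegaB p 𝔽).Nondegenerate := by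
  have key : ∀ x : N0 p 𝔽, (∀ y, omegaForm p 𝔽 x y = 0) → x = 0 := by
    intro x hx
    have h0 := hx (Pi.single 0 1)
    have h1 := hx (Pi.single 1 1)
    have h2 := hx (Pi.single 2 1)
    have h3 := hx (Pi.single 3 1)
    simp [omegaForm] at h0 h1 h2 h3
    ext i
    fin_cases i <;> simp_all
  refine ⟨fun x hx => key x hx, fun x hx => key x fun y => ?_⟩
  rw [omega_skew, neg_eq_zero]; exact hx y

theorem dualL_eq (D : Submodule (Wp p 𝔽) (N0 p 𝔽)) :
    dualL p 𝔽 D = (omegaB p 𝔽).dualSubmodule D := by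
  ext x
  rw [LinearMap.BilinForm.mem_dualSubmodule]
  simp only [Submodule.mem_one]
  rfl

theorem dualL_eq_flip (D : Submodule (Wp p 𝔽) (N0 p 𝔽)) :
    dualL p 𝔽 D = (omegaB p 𝔽).flip.dualSubmodule D := by
  ext x
  rw [LinearMap.BilinForm.mem_dualSubmodule]
  simp only [Submodule.mem_one]
  refine forall₂_congr fun y _ => ?_
  rw [omega_skew, LinearMap.BilinForm.flip_apply, omegaB_apply]
  constructor
  · rintro ⟨w, hw⟩
    exact ⟨-w, by rw [map_neg, hw, neg_neg]⟩
  · rintro ⟨w, hw⟩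
    exact ⟨-w, by rw [map_neg, hw]⟩

theorem covBy_sup_eq' {α : Type*} [Lattice α] {a b c : α} (h1 : a ⋖ c) (h2 : b ⋖ c)
    (hne : a ≠ b) : a ⊔ b = c := by
  by_contra h
  have hlt : a ⊔ b < c := lt_of_le_of_ne (sup_le h1.1.le h2.1.le) h
  have ea : a = a ⊔ b := by
    by_contra h'
    exact h1.2 (lt_of_le_of_ne le_sup_left h') hlt
  have eb : b = a ⊔ b := by
    by_contra h'
    exact h2.2 (lt_of_le_of_ne le_sup_right h') hlt
  exact hne (ea.trans eb.symm)

variable {p 𝔽}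

theorem IsLattice.exists_basis {D : Submodule (Wp p 𝔽) (N0 p 𝔽)} (h : IsLattice p 𝔽 D) :
    ∃ b : Module.Basis (Fin 4) (Kp p 𝔽) (N0 p 𝔽),
      Submodule.span (Wp p 𝔽) (Set.range b) = D := by
  have : Submodule.IsLattice (Kp p 𝔽) D := ⟨h.1, h.2⟩
  have : Module.Free (Wp p 𝔽) D := Submodule.IsLattice.free (Kp p 𝔽) D
  have hr : Module.finrank (Wp p 𝔽) D = 4 := by
    simpa using Submodule.IsLattice.finrank_of_pi (Kp p 𝔽) D
  let b := Module.finBasisOfFinrankEq (Wp p 𝔽) D hr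
  refine ⟨b.extendOfIsLattice (Kp p 𝔽), ?_⟩
  have : Set.range (b.extendOfIsLattice (Kp p 𝔽)) = D.subtype '' Set.range b := by
    rw [← Set.range_comp]
    congr 1
    ext1 k
    simp
  rw [this, ← Submodule.map_span, b.span_eq]
  simp

theorem isLattice_of_basis (b : Module.Basis (Fin 4) (Kp p 𝔽) (N0 p 𝔽)) :
    IsLattice p 𝔽 (Submodule.span (Wp p 𝔽) (Set.range b)) := by
  refine ⟨Submodule.fg_span (Set.finite_range _), ?_⟩
  rw [eq_top_iff, ← b.span_eq]
  exact Submodule.span_mono Submodule.subset_span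

theorem IsLattice.dual {D : Submodule (Wp p 𝔽) (N0 p 𝔽)} (h : IsLattice p 𝔽 D) :
    IsLattice p 𝔽 (dualL p 𝔽 D) := by
  obtain ⟨b, rfl⟩ := h.exists_basis
  rw [dualL_eq, LinearMap.BilinForm.dualSubmodule_span_of_basis _ (omegaB_nondeg p 𝔽)]
  exact isLattice_of_basis _

theorem IsLattice.dd {D : Submodule (Wp p 𝔽) (N0 p 𝔽)} (h : IsLattice p 𝔽 D) :
    dualL p 𝔽 (dualL p 𝔽 D) = D := by
  obtain ⟨b, rfl⟩ := h.exists_basis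
  rw [dualL_eq_flip, dualL_eq]
  exact LinearMap.BilinForm.dualSubmodule_flip_dualSubmodule_of_basis _ (omegaB_nondeg p 𝔽) b

theorem pK_ne : (algebraMap (Wp p 𝔽) (Kp p 𝔽) (p : Wp p 𝔽)) ≠ 0 := by
  have : (p : Wp p 𝔽) ≠ 0 := WittVector.irreducible p |>.ne_zero
  exact fun h => this (IsFractionRing.injective (Wp p 𝔽) (Kp p 𝔽) (h.trans (map_zero _).symm))

theorem mem_psmul {A : Submodule (Wp p 𝔽) (N0 p 𝔽)} {x : N0 p 𝔽} :
    x ∈ (p : Wp p 𝔽) • A ↔ ∃ y ∈ A, (p : Wp p 𝔽) • y = x :=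
  Submodule.mem_smul_pointwise_iff_exists x _ A

theorem psmul_mono {A B : Submodule (Wp p 𝔽) (N0 p 𝔽)} (h : A ≤ B) :
    (p : Wp p 𝔽) • A ≤ (p : Wp p 𝔽) • B := by
  intro x hx
  obtain ⟨y, hy, rfl⟩ := mem_psmul.1 hx
  exact mem_psmul.2 ⟨y, h hy, rfl⟩

theorem psmul_inj {x y : N0 p 𝔽} (h : (p : Wp p 𝔽) • x = (p : Wp p 𝔽) • y) : x = y := by
  ext i
  have := congrFun h i
  simp only [Pi.smul_apply, Algebra.smul_def] at this
  exact mul_left_cancel₀ pK_ne this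

theorem psmul_injective {A B : Submodule (Wp p 𝔽) (N0 p 𝔽)}
    (h : (p : Wp p 𝔽) • A = (p : Wp p 𝔽) • B) : A = B := by
  have aux : ∀ {A B : Submodule (Wp p 𝔽) (N0 p 𝔽)},
      (p : Wp p 𝔽) • A ≤ (p : Wp p 𝔽) • B → A ≤ B := by
    intro A B h x hx
    obtain ⟨y, hy, e⟩ := mem_psmul.1 (h (mem_psmul.2 ⟨x, hx, rfl⟩))
    rw [← psmul_inj e]; exact hy
  exact le_antisymm (aux h.le) (aux h.ge)

theorem isLattice_between {A X : Submodule (Wp p 𝔽) (N0 p 𝔽)} (hA : IsLattice p 𝔽 A)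
    (h1 : (p : Wp p 𝔽) • A ≤ X) (h2 : X ≤ A) : IsLattice p 𝔽 X := by
  constructor
  · have : Module.Finite (Wp p 𝔽) A := Module.Finite.iff_fg.2 hA.1
    have : IsNoetherian (Wp p 𝔽) A := inferInstance
    have h := IsNoetherian.noetherian (X.comap A.subtype)
    have h' := h.map A.subtype
    rw [Submodule.map_comap_subtype, inf_eq_right.2 h2] at h'
    exact h'
  · rw [eq_top_iff, ← hA.2, Submodule.span_le]
    intro x hx
    have hm : (p : Wp p 𝔽) • x ∈ Submodule.span (Kp p 𝔽) (X : Set (N0 p 𝔽)) :=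
      Submodule.subset_span (h1 (mem_psmul.2 ⟨x, hx, rfl⟩))
    have := Submodule.smul_mem _ (algebraMap (Wp p 𝔽) (Kp p 𝔽) (p : Wp p 𝔽))⁻¹ hm
    rw [← algebraMap_smul (Kp p 𝔽) (p : Wp p 𝔽) x, smul_smul, inv_mul_cancel₀ pK_ne,
      one_smul] at this
    exact this

theorem dual_anti {A B : Submodule (Wp p 𝔽) (N0 p 𝔽)} (h : A ≤ B) :
    dualL p 𝔽 B ≤ dualL p 𝔽 A := fun _ hx d hd => hx d (h hd)

theorem le_dual_comm {A B : Submodule (Wp p 𝔽) (N0 p 𝔽)} (h : A ≤ dualL p 𝔽 B) :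
    B ≤ dualL p 𝔽 A := by
  intro b hb a ha
  rw [omega_skew]
  exact neg_mem (h ha b hb)

theorem dual_sup (A B : Submodule (Wp p 𝔽) (N0 p 𝔽)) :
    dualL p 𝔽 (A ⊔ B) = dualL p 𝔽 A ⊓ dualL p 𝔽 B := by
  apply le_antisymm
  · exact le_inf (dual_anti le_sup_left) (dual_anti le_sup_right)
  · apply le_dual_comm
    exact sup_le (le_dual_comm inf_le_left) (le_dual_comm inf_le_right)

theorem psmul_dual_le {A B : Submodule (Wp p 𝔽) (N0 p 𝔽)}
    (h : (p : Wp p 𝔽) • A ≤ B) : (p : Wp p 𝔽) • dualL p 𝔽 B ≤ dualL p 𝔽 A := by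
  intro x hx a ha
  obtain ⟨y, hy, rfl⟩ := mem_psmul.1 hx
  have := hy _ (h (mem_psmul.2 ⟨a, ha, rfl⟩))
  have e : omegaForm p 𝔽 ((p : Wp p 𝔽) • y) a = omegaForm p 𝔽 y ((p : Wp p 𝔽) • a) := by
    simp [omegaForm, Algebra.smul_def]; ring
  rw [e]; exact this

theorem psmul_sup (A B : Submodule (Wp p 𝔽) (N0 p 𝔽)) :
    (p : Wp p 𝔽) • (A ⊔ B) = (p : Wp p 𝔽) • A ⊔ (p : Wp p 𝔽) • B :=
  Submodule.smul_sup' _ A B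

section Tau

variable {σ}

theorem sigma_mem_iff (hσ : IsWittFrobenius p 𝔽 σ) (a : Kp p 𝔽) :
    σ a ∈ (algebraMap (Wp p 𝔽) (Kp p 𝔽)).range ↔ a ∈ (algebraMap (Wp p 𝔽) (Kp p 𝔽)).range := by
  constructor
  · rintro ⟨w, hw⟩
    refine ⟨(WittVector.frobeniusEquiv p 𝔽).symm w, σ.injective ?_⟩
    rw [hσ, RingEquiv.apply_symm_apply, hw]
  · rintro ⟨w, rfl⟩
    exact ⟨_, (hσ w).symm⟩

theorem tauFun_smul (hσ : IsWittFrobenius p 𝔽 σ) (c : Wp p 𝔽) (x : N0 p 𝔽) :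
    tauFun p 𝔽 σ (c • x) = (WittVector.frobeniusEquiv p 𝔽 c) • tauFun p 𝔽 σ x := by
  ext i
  simp only [tauFun, Pi.smul_apply, Algebra.smul_def, map_mul, hσ c]

theorem tauFun_psmul (hσ : IsWittFrobenius p 𝔽 σ) (x : N0 p 𝔽) :
    tauFun p 𝔽 σ ((p : Wp p 𝔽) • x) = (p : Wp p 𝔽) • tauFun p 𝔽 σ x := by
  rw [tauFun_smul hσ, map_natCast]

theorem mem_tauL (hσ : IsWittFrobenius p 𝔽 σ) {A : Submodule (Wp p 𝔽) (N0 p 𝔽)} {x : N0 p 𝔽} :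
    x ∈ tauL p 𝔽 σ A ↔ ∃ y ∈ A, tauFun p 𝔽 σ y = x := by
  constructor
  · intro hx
    induction hx using Submodule.span_induction with
    | mem x hx => exact hx
    | zero => exact ⟨0, zero_mem _, by ext i; simp [tauFun]⟩
    | add x y _ _ hx hy =>
      obtain ⟨a, ha, rfl⟩ := hx
      obtain ⟨b, hb, rfl⟩ := hy
      exact ⟨a + b, add_mem ha hb, by ext i; simp [tauFun]⟩
    | smul c x _ hx =>
      obtain ⟨a, ha, rfl⟩ := hx
      refine ⟨(WittVector.frobeniusEquiv p 𝔽).symm c • a, A.smul_mem _ ha, ?_⟩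
      rw [tauFun_smul hσ, RingEquiv.apply_symm_apply]
  · intro hx
    exact Submodule.subset_span hx

theorem tauFun_injective : Function.Injective (tauFun p 𝔽 σ) := by
  intro x y h
  ext i
  exact σ.injective (congrFun h i)

theorem tauL_le_iff (hσ : IsWittFrobenius p 𝔽 σ) {A B : Submodule (Wp p 𝔽) (N0 p 𝔽)} :
    tauL p 𝔽 σ A ≤ tauL p 𝔽 σ B ↔ A ≤ B := by
  constructor
  · intro h x hx
    obtain ⟨y, hy, e⟩ := (mem_tauL hσ).1 (h ((mem_tauL hσ).2 ⟨x, hx, rfl⟩))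
    rw [← tauFun_injective e]; exact hy
  · intro h
    exact Submodule.span_mono (Set.image_mono h)

theorem tauL_surj (hσ : IsWittFrobenius p 𝔽 σ) (B : Submodule (Wp p 𝔽) (N0 p 𝔽)) : ∃ A, tauL p 𝔽 σ A = B := by
  refine ⟨{ carrier := {x | tauFun p 𝔽 σ x ∈ B}, zero_mem' := ?_, add_mem' := ?_,
            smul_mem' := ?_ }, ?_⟩
  · intro x y hx hy
    have : tauFun p 𝔽 σ (x + y) = tauFun p 𝔽 σ x + tauFun p 𝔽 σ y := by
      ext i; simp [tauFun]
    change tauFun p 𝔽 σ (x + y) ∈ B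
    rw [this]; exact add_mem hx hy
  · have : tauFun p 𝔽 σ 0 = 0 := by ext i; simp [tauFun]
    change tauFun p 𝔽 σ 0 ∈ B
    rw [this]; exact zero_mem _
  · intro c x hx
    change tauFun p 𝔽 σ (c • x) ∈ B
    rw [tauFun_smul hσ]; exact B.smul_mem _ hx
  · ext x
    rw [mem_tauL hσ]
    constructor
    · rintro ⟨y, hy, rfl⟩; exact hy
    · intro hx
      have e : tauFun p 𝔽 σ (fun i => σ.symm (x i)) = x := by ext i; simp [tauFun]
      exact ⟨_, by change tauFun p 𝔽 σ _ ∈ B; rw [e]; exact hx, e⟩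

/-- `τ` as an order automorphism of the lattice of submodules. -/
def tauIso (hσ : IsWittFrobenius p 𝔽 σ) : Submodule (Wp p 𝔽) (N0 p 𝔽) ≃o Submodule (Wp p 𝔽) (N0 p 𝔽) :=
  RelIso.ofSurjective (OrderEmbedding.ofMapLEIff (tauL p 𝔽 σ) fun _ _ => tauL_le_iff hσ)
    (tauL_surj hσ)

theorem tauIso_apply (hσ : IsWittFrobenius p 𝔽 σ) (A : Submodule (Wp p 𝔽) (N0 p 𝔽)) : tauIso hσ A = tauL p 𝔽 σ A := rfl

theorem tauIso_psmul (hσ : IsWittFrobenius p 𝔽 σ) (A : Submodule (Wp p 𝔽) (N0 p 𝔽)) :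
    tauIso hσ ((p : Wp p 𝔽) • A) = (p : Wp p 𝔽) • tauIso hσ A := by
  ext x
  rw [mem_psmul, tauIso_apply, tauIso_apply, mem_tauL hσ]
  constructor
  · rintro ⟨y, hy, rfl⟩
    obtain ⟨z, hz, rfl⟩ := mem_psmul.1 hy
    exact ⟨_, (mem_tauL hσ).2 ⟨z, hz, rfl⟩, (tauFun_psmul hσ z).symm⟩
  · rintro ⟨y, hy, rfl⟩
    obtain ⟨z, hz, rfl⟩ := (mem_tauL hσ).1 hy
    exact ⟨_, mem_psmul.2 ⟨z, hz, rfl⟩, tauFun_psmul hσ z⟩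

theorem omega_tau (x y : N0 p 𝔽) :
    omegaForm p 𝔽 (tauFun p 𝔽 σ x) (tauFun p 𝔽 σ y) = σ (omegaForm p 𝔽 x y) := by
  simp [omegaForm, tauFun]

theorem tauIso_dual (hσ : IsWittFrobenius p 𝔽 σ) (A : Submodule (Wp p 𝔽) (N0 p 𝔽)) :
    tauIso hσ (dualL p 𝔽 A) = dualL p 𝔽 (tauIso hσ A) := by
  ext x
  have e : tauFun p 𝔽 σ (fun i => σ.symm (x i)) = x := by ext i; simp [tauFun]
  rw [tauIso_apply, tauIso_apply, mem_tauL hσ]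
  constructor
  · rintro ⟨y, hy, rfl⟩ d hd
    obtain ⟨z, hz, rfl⟩ := (mem_tauL hσ).1 hd
    rw [omega_tau, sigma_mem_iff hσ]
    exact hy z hz
  · intro hx
    refine ⟨_, ?_, e⟩
    intro d hd
    have := hx _ ((mem_tauL hσ).2 ⟨d, hd, rfl⟩)
    rw [← e, omega_tau, sigma_mem_iff hσ] at this
    exact this

/-- The lattices `p^(k-a) W⁴`. -/
def boxL (p : ℕ) [Fact p.Prime] (𝔽 : Type) [Field 𝔽] [IsAlgClosed 𝔽] [CharP 𝔽 p] (a k : ℕ) : Submodule (Wp p 𝔽) (N0 p 𝔽) where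
  carrier := {x | ∀ i, ∃ w : Wp p 𝔽, algebraMap (Wp p 𝔽) (Kp p 𝔽) (p ^ a) * x i
    = algebraMap (Wp p 𝔽) (Kp p 𝔽) (p ^ k * w)}
  zero_mem' := fun i => ⟨0, by simp⟩
  add_mem' := by
    intro x y hx hy i
    obtain ⟨u, hu⟩ := hx i
    obtain ⟨v, hv⟩ := hy i
    exact ⟨u + v, by rw [Pi.add_apply, mul_add, hu, hv, ← map_add, ← mul_add]⟩
  smul_mem' := by
    intro c x hx i
    obtain ⟨u, hu⟩ := hx i
    refine ⟨c * u, ?_⟩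
    rw [Pi.smul_apply, Algebra.smul_def, mul_left_comm, hu, ← map_mul, mul_left_comm]

theorem mem_boxL {a k : ℕ} {x : N0 p 𝔽} : x ∈ boxL p 𝔽 a k ↔
    ∀ i, ∃ w : Wp p 𝔽, algebraMap (Wp p 𝔽) (Kp p 𝔽) (p ^ a) * x i
    = algebraMap (Wp p 𝔽) (Kp p 𝔽) (p ^ k * w) := Iff.rfl

theorem tauIso_boxL (hσ : IsWittFrobenius p 𝔽 σ) (a k : ℕ) : tauIso hσ (boxL p 𝔽 a k) = boxL p 𝔽 a k := by
  have hs : ∀ n : ℕ, σ (algebraMap (Wp p 𝔽) (Kp p 𝔽) (p ^ n))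
      = algebraMap (Wp p 𝔽) (Kp p 𝔽) (p ^ n) := by intro n; simp
  ext x
  have e : tauFun p 𝔽 σ (fun i => σ.symm (x i)) = x := by ext i; simp [tauFun]
  rw [tauIso_apply, mem_tauL hσ]
  constructor
  · rintro ⟨y, hy, rfl⟩ i
    obtain ⟨w, hw⟩ := hy i
    refine ⟨WittVector.frobeniusEquiv p 𝔽 w, ?_⟩
    rw [map_mul, ← hσ, ← hs a, ← hs k, ← map_mul σ, ← map_mul, ← hw, map_mul σ]
    rfl
  · intro hx
    refine ⟨_, ?_, e⟩
    intro i
    obtain ⟨w, hw⟩ := hx i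
    refine ⟨(WittVector.frobeniusEquiv p 𝔽).symm w, σ.injective ?_⟩
    rw [map_mul σ, hs, RingEquiv.apply_symm_apply, hw, map_mul, map_mul, map_mul σ, hs, hσ,
      RingEquiv.apply_symm_apply]

theorem psmul_boxL (a k : ℕ) : (p : Wp p 𝔽) • boxL p 𝔽 a k ≤ boxL p 𝔽 a (k + 1) := by
  intro x hx i
  obtain ⟨y, hy, rfl⟩ := mem_psmul.1 hx
  obtain ⟨w, hw⟩ := hy i
  refine ⟨w, ?_⟩
  rw [Pi.smul_apply, Algebra.smul_def, mul_left_comm, hw, ← map_mul]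
  congr 1
  ring

theorem exists_boxL {D : Submodule (Wp p 𝔽) (N0 p 𝔽)} (hD : D.FG) :
    ∃ a, D ≤ boxL p 𝔽 a 0 := by
  have hmono : ∀ a b, a ≤ b → boxL p 𝔽 a 0 ≤ boxL p 𝔽 b 0 := by
    intro a b hab x hx i
    obtain ⟨w, hw⟩ := hx i
    refine ⟨p ^ (b - a) * w, ?_⟩
    rw [← Nat.sub_add_cancel hab, pow_add, map_mul, mul_assoc, hw]
    simp
  have hel : ∀ c : Kp p 𝔽, ∃ a : ℕ, ∃ w : Wp p 𝔽,
      algebraMap (Wp p 𝔽) (Kp p 𝔽) (p ^ a) * c = algebraMap (Wp p 𝔽) (Kp p 𝔽) w := by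
    intro c
    obtain ⟨n, d, hd, rfl⟩ := IsFractionRing.div_surjective (A := Wp p 𝔽) c
    have hd0 : d ≠ 0 := nonZeroDivisors.ne_zero hd
    obtain ⟨m, u, hu⟩ := WittVector.exists_eq_pow_p_mul' d hd0
    have hd1 : algebraMap (Wp p 𝔽) (Kp p 𝔽) d ≠ 0 := by simpa using hd0
    refine ⟨m, n * (↑u⁻¹ : Wp p 𝔽), ?_⟩
    rw [mul_div_assoc', div_eq_iff hd1, ← map_mul, ← map_mul]
    congr 1
    rw [hu]
    calc (p : Wp p 𝔽) ^ m * n = n * p ^ m * (↑u⁻¹ * ↑u : Wp p 𝔽) := by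
            rw [Units.inv_mul]; ring
      _ = _ := by ring
  have hx : ∀ x : N0 p 𝔽, ∃ a, x ∈ boxL p 𝔽 a 0 := by
    intro x
    choose a w haw using fun i => hel (x i)
    refine ⟨∑ i, a i, fun i => ?_⟩
    have hle : a i ≤ ∑ i, a i := Finset.single_le_sum (fun _ _ => Nat.zero_le _) (Finset.mem_univ i)
    refine ⟨p ^ ((∑ i, a i) - a i) * w i, ?_⟩
    rw [← Nat.sub_add_cancel hle, pow_add, map_mul, mul_assoc, haw]
    simp
  obtain ⟨s, rfl⟩ := hD
  choose a ha using hx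
  refine ⟨∑ x ∈ s, a x, Submodule.span_le.2 fun x hxs => ?_⟩
  exact hmono _ _ (Finset.single_le_sum (fun _ _ => Nat.zero_le _) hxs) (ha x)

theorem boxL_inter {a : ℕ} {x : N0 p 𝔽} (h : ∀ k, x ∈ boxL p 𝔽 a k) : x = 0 := by
  ext i
  have h0 := h 0 i
  obtain ⟨v, hv⟩ := h0
  rw [pow_zero, one_mul] at hv
  have hdiv : ∀ k, (p : Wp p 𝔽) ^ k ∣ v := by
    intro k
    obtain ⟨w, hw⟩ := h k i
    rw [hv] at hw
    exact ⟨w, IsFractionRing.injective (Wp p 𝔽) (Kp p 𝔽) hw⟩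
  have hv0 : v = 0 := by
    by_contra hne
    obtain ⟨m, u, hu⟩ := WittVector.exists_eq_pow_p_mul' v hne
    have := hdiv (m + 1)
    rw [hu, pow_succ] at this
    have hp0 : (p : Wp p 𝔽) ^ m ≠ 0 := pow_ne_zero _ (WittVector.irreducible p).ne_zero
    have h2 := (mul_dvd_mul_iff_left hp0).1 this
    exact (WittVector.irreducible p).not_isUnit (isUnit_of_dvd_unit h2 u.isUnit)
  rw [hv0, map_zero, map_pow, mul_eq_zero] at hv
  rcases hv with hv | hv
  · exact absurd hv (pow_ne_zero _ pK_ne)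
  · simpa using hv

end Tau

end Helpers


/-- For every `D ∈ ℳ(𝔽)` there is a `τ`-stable lattice `L` in `N₀`
with `pL^∨ ⊆ pD^∨ ⊆ D ⊆ L ⊆ L^∨ ⊆ D^∨` or `pD^∨ ⊆ pL^∨ ⊆ L ⊆ D ⊆ D^∨ ⊆ L^∨`. -/
theorem crucial_lemma_quaternionic
    (p : ℕ) [Fact p.Prime] (hp : Odd p)
    (𝔽 : Type) [Field 𝔽] [IsAlgClosed 𝔽] [CharP 𝔽 p]
    (σ : Kp p 𝔽 ≃+* Kp p 𝔽) (hσ : IsWittFrobenius p 𝔽 σ)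
    (D : Submodule (Wp p 𝔽) (N0 p 𝔽)) (hD : memM p 𝔽 σ D) :
    ∃ L : Submodule (Wp p 𝔽) (N0 p 𝔽), IsLattice p 𝔽 L ∧ tauL p 𝔽 σ L = L ∧
      (((p : Wp p 𝔽) • dualL p 𝔽 L ≤ (p : Wp p 𝔽) • dualL p 𝔽 D ∧
        (p : Wp p 𝔽) • dualL p 𝔽 D ≤ D ∧ D ≤ L ∧ L ≤ dualL p 𝔽 L ∧
        dualL p 𝔽 L ≤ dualL p 𝔽 D) ∨
       ((p : Wp p 𝔽) • dualL p 𝔽 D ≤ (p : Wp p 𝔽) • dualL p 𝔽 L ∧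
        (p : Wp p 𝔽) • dualL p 𝔽 L ≤ L ∧ L ≤ D ∧ D ≤ dualL p 𝔽 D ∧
        dualL p 𝔽 D ≤ dualL p 𝔽 L)) := by
  obtain ⟨hlat, h1, h2, h3, h4, -⟩ := hD
  obtain ⟨t, htdef⟩ : ∃ t, t = tauIso hσ := ⟨_, rfl⟩
  have ht : ∀ A, tauL p 𝔽 σ A = t A := fun A => by rw [htdef]; rfl
  have htp : ∀ A, t ((p : Wp p 𝔽) • A) = (p : Wp p 𝔽) • t A := fun A => by
    rw [htdef]; exact tauIso_psmul hσ A
  have htd : ∀ A, t (dualL p 𝔽 A) = dualL p 𝔽 (t A) := fun A => by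
    rw [htdef]; exact tauIso_dual hσ A
  have htb : ∀ a k, t (boxL p 𝔽 a k) = boxL p 𝔽 a k := fun a k => by
    rw [htdef]; exact tauIso_boxL hσ a k
  clear htdef
  simp only [ht] at *
  obtain ⟨E, hE⟩ : ∃ E, E = dualL p 𝔽 D := ⟨_, rfl⟩
  rw [← hE] at h1 h2 h3 h4 ⊢
  have hlatE : IsLattice p 𝔽 E := by rw [hE]; exact hlat.dual
  have hDD : dualL p 𝔽 E = D := by rw [hE]; exact hlat.dd
  by_cases hst : t D = D
  · exact ⟨D, hlat, hst, Or.inl ⟨(by rw [hE]), h1.1, le_rfl, (by rw [← hE]; exact h2.1), (by rw [hE])⟩⟩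
  have n1 : ¬ t D ≤ D := by
    intro h
    obtain ⟨X, hX1, hX2⟩ := h2.exists_mid
    exact h4.no_chain p 𝔽 (lt_of_le_of_ne h hst) hX1 hX2
  have n2 : ¬ D ≤ t D := by
    intro h
    obtain ⟨X, hX1, hX2⟩ := h4.exists_mid
    exact h2.no_chain p 𝔽 (lt_of_le_of_ne h (Ne.symm hst)) hX1 hX2
  have htE : t E = dualL p 𝔽 (t D) := by rw [hE, htd]
  have hlatt : IsLattice p 𝔽 (t D) := isLattice_between hlatE h3.1 h4.1
  have hlattE : IsLattice p 𝔽 (t E) := by rw [htE]; exact hlatt.dual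
  have htDD : dualL p 𝔽 (t E) = t D := by rw [htE]; exact hlatt.dd
  have hDtE : D ≤ t E := by rw [htE]; exact le_dual_comm (by rw [← hE]; exact h4.1)
  have htDtE : t D ≤ t E := t.monotone h2.1
  -- the upper lattice
  obtain ⟨T, hT⟩ : ∃ T, T = D ⊔ t D := ⟨_, rfl⟩
  have u1 : D ≤ T := by rw [hT]; exact le_sup_left
  have u2 : t D ≤ T := by rw [hT]; exact le_sup_right
  have hDT : D < T := lt_of_le_of_ne (by rw [hT]; exact le_sup_left) fun h => n1 (u2.trans h.ge)
  have htDT : t D < T :=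
    lt_of_le_of_ne (by rw [hT]; exact le_sup_right) fun h => n2 (u1.trans h.ge)
  have hTE : T ≤ E := by rw [hT]; exact sup_le h2.1 h4.1
  have hlatT : IsLattice p 𝔽 T := isLattice_between hlatE (h1.1.trans hDT.le) hTE
  have hTd : dualL p 𝔽 T = E ⊓ t E := by rw [hT, dual_sup, ← htE, ← hE]
  have hTT : T ≤ dualL p 𝔽 T := by
    rw [hTd]; exact le_inf hTE (by rw [hT]; exact sup_le hDtE htDtE)
  have hTdE : dualL p 𝔽 T < E := by
    refine lt_of_le_of_ne (by rw [hTd]; exact inf_le_left) fun h => hDT.ne ?_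
    rw [← hlatT.dd, h, hDD]
  have hTself : T = dualL p 𝔽 T := by
    by_contra hne
    exact h2.no_chain p 𝔽 hDT (lt_of_le_of_ne hTT hne) hTdE
  by_cases hTst : t T = T
  · exact ⟨T, hlatT, hTst, Or.inl ⟨psmul_mono hTdE.le, h1.1, hDT.le, hTT, hTdE.le⟩⟩
  -- the lower lattice
  obtain ⟨S, hS⟩ : ∃ S, S = D ⊓ t D := ⟨_, rfl⟩
  have v1 : S ≤ D := by rw [hS]; exact inf_le_left
  have v2 : S ≤ t D := by rw [hS]; exact inf_le_right
  have hSD : S < D := lt_of_le_of_ne (by rw [hS]; exact inf_le_left) fun h => n2 (h.ge.trans v2)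
  have hStD : S < t D :=
    lt_of_le_of_ne (by rw [hS]; exact inf_le_right) fun h => n1 (h.ge.trans v1)
  have hpES : (p : Wp p 𝔽) • E ≤ S := by rw [hS]; exact le_inf h1.1 h3.1
  have hlatS : IsLattice p 𝔽 S := isLattice_between hlatE hpES (hSD.le.trans h2.1)
  have hptED : (p : Wp p 𝔽) • t E ≤ D := by
    have := psmul_dual_le h3.1
    rwa [← htE, hDD] at this
  have hpptED : (p : Wp p 𝔽) • t E ≤ t D := by
    have := t.monotone h1.1
    rwa [htp] at this
  have hEtE : E ≤ dualL p 𝔽 S := by rw [hE]; exact dual_anti hSD.le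
  have htEtE : t E ≤ dualL p 𝔽 S := by rw [htE]; exact dual_anti hStD.le
  have hSd : dualL p 𝔽 S = E ⊔ t E := by
    have hl : IsLattice p 𝔽 (E ⊔ t E) := by
      refine isLattice_between hlatS.dual ?_ (sup_le hEtE htEtE)
      refine le_trans ?_ (h2.1.trans le_sup_left)
      have := psmul_dual_le hpES
      rwa [hDD] at this
    rw [← hl.dd, dual_sup, hDD, htDD, hS]
  have hSS : (p : Wp p 𝔽) • dualL p 𝔽 S ≤ S := by
    rw [hSd, psmul_sup]
    exact sup_le hpES (by rw [hS]; exact le_inf hptED hpptED)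
  have hpElt : (p : Wp p 𝔽) • E < (p : Wp p 𝔽) • dualL p 𝔽 S := by
    refine lt_of_le_of_ne (psmul_mono hEtE) fun h => hSD.ne ?_
    rw [← hlatS.dd, ← psmul_injective h, hDD]
  have hSself : (p : Wp p 𝔽) • dualL p 𝔽 S = S := by
    by_contra hne
    exact h1.no_chain p 𝔽 hpElt (lt_of_le_of_ne hSS hne) hSD
  by_cases hSst : t S = S
  · exact ⟨S, hlatS, hSst, Or.inr ⟨hpElt.le, hSS, hSD.le, h2.1, hEtE⟩⟩
  -- the remaining case is impossible
  exfalso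
  have hpES' : (p : Wp p 𝔽) • E < S := by rw [hSself] at hpElt; exact hpElt
  have c1 : S ⋖ t D := ⟨hStD, fun X hX1 hX2 => h3.no_chain p 𝔽 hpES' hX1 hX2⟩
  have c2 : t S ⋖ t D :=
    (apply_covBy_apply_iff t).2 ⟨hSD, fun X hX1 hX2 => h1.no_chain p 𝔽 hpES' hX1 hX2⟩
  have e1 : S ⊔ t S = t D := covBy_sup_eq' c1 c2 (Ne.symm hSst)
  have hTltE : T < E := by rw [hTself]; exact hTdE
  have c3 : t T ⋖ t E :=
    (apply_covBy_apply_iff t).2 ⟨hTltE, fun X hX1 hX2 => h2.no_chain p 𝔽 hDT hX1 hX2⟩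
  have c4 : T ⋖ t E := by
    refine ⟨lt_of_le_of_ne (by rw [hT]; exact sup_le hDtE htDtE) fun h => ?_, fun X hX1 hX2 => ?_⟩
    · have := hTself
      nth_rewrite 2 [h] at this
      rw [htDD] at this
      exact htDT.ne this.symm
    · have g1 := t.symm.strictMono htDT
      have g2 := t.symm.strictMono hX1
      have g3 := t.symm.strictMono hX2
      rw [OrderIso.symm_apply_apply] at g1 g3
      exact h2.no_chain p 𝔽 g1 g2 g3
  have e2 : T ⊔ t T = t E := covBy_sup_eq' c4 c3 (Ne.symm hTst)
  have key : ∀ X, t X ≤ X → D ≤ X → t (t D) ≤ (p : Wp p 𝔽) • X := by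
    intro X hX hDX
    have a1 : t D ≤ X := (t.monotone hDX).trans hX
    have a2 : T ≤ X := by rw [hT]; exact sup_le hDX a1
    have a3 : t E ≤ X := by rw [← e2]; exact sup_le a2 ((t.monotone a2).trans hX)
    have a4 : t (dualL p 𝔽 S) ≤ X := by
      rw [hSd, t.map_sup]; exact sup_le a3 ((t.monotone a3).trans hX)
    have a5 : t S ≤ (p : Wp p 𝔽) • X := by
      rw [← hSself, htp]; exact psmul_mono a4
    have a6 : t (t S) ≤ (p : Wp p 𝔽) • X := by
      refine (t.monotone a5).trans ?_
      rw [htp]; exact psmul_mono hX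
    rw [← e1, t.map_sup]
    exact sup_le a5 a6
  obtain ⟨a, ha⟩ := exists_boxL hlat.1
  have hall : ∀ k, D ≤ boxL p 𝔽 a k := by
    intro k
    induction k with
    | zero => exact ha
    | succ k ih =>
      have hb := (key _ (htb a k).le ih).trans (psmul_boxL a k)
      have hb2 : t (t (boxL p 𝔽 a (k + 1))) = boxL p 𝔽 a (k + 1) := by
        rw [htb, htb]
      rw [← hb2] at hb
      exact t.le_iff_le.1 (t.le_iff_le.1 hb)
  have hD0 : D = ⊥ := (Submodule.eq_bot_iff _).2 fun x hx => boxL_inter fun k => hall k hx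
  have hsp := hlat.2
  rw [hD0, Submodule.bot_coe, Submodule.span_zero_singleton] at hsp
  exact bot_ne_top hsp

end
end

section
/- Let L be a τ-stable lattice with pL^∨ ⊂² L ⊂² L^∨, and let D ∈ ℳ(𝔽) satisfy L ⊆ D. Then D = L; in particular D is τ-stable. -/
open Pointwise

noncomputable section

variable (p : ℕ) [Fact p.Prime] (𝔽 : Type) [Field 𝔽] [IsAlgClosed 𝔽] [CharP 𝔽 p]

variable (σ : Kp p 𝔽 ≃+* Kp p 𝔽)

theorem eq_of_chain {R M : Type*} [Ring R] [AddCommGroup M] [Module R M]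
    (A B C E : Submodule R M) (hAB : A ≤ B) (hBC : B ≤ C) (hCE : C ≤ E)
    (h1 : Module.length R (E ⧸ A.comap E.subtype) = 2)
    (h2 : Module.length R (C ⧸ B.comap C.subtype) = 2) : B = A := by
  let f : (C ⧸ A.comap C.subtype) →ₗ[R] (E ⧸ A.comap E.subtype) :=
    Submodule.mapQ _ _ (Submodule.inclusion hCE) (fun x hx => hx)
  let g : (C ⧸ A.comap C.subtype) →ₗ[R] (C ⧸ B.comap C.subtype) :=
    Submodule.mapQ _ _ LinearMap.id (fun x hx => hAB hx)
  have hf : Function.Injective f := by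
    rw [← LinearMap.ker_eq_bot, LinearMap.ker_eq_bot']
    intro m hm
    obtain ⟨x, rfl⟩ := Submodule.Quotient.mk_surjective _ m
    replace hm := (Submodule.Quotient.mk_eq_zero _).1 hm
    rw [Submodule.Quotient.mk_eq_zero]
    exact hm
  have hg : Function.Surjective g := by
    intro m
    obtain ⟨x, rfl⟩ := Submodule.Quotient.mk_surjective _ m
    exact ⟨Submodule.Quotient.mk x, rfl⟩
  have hle := Module.length_le_of_injective f hf
  have hadd := Module.length_eq_add_of_exact (LinearMap.ker g).subtype g
    (Submodule.subtype_injective _) hg (LinearMap.exact_subtype_ker_map g)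
  rw [h1, hadd, h2] at hle
  have h0 : Module.length R (LinearMap.ker g) = 0 := by
    generalize Module.length R (LinearMap.ker g) = n at hle
    induction n using ENat.recTopCoe with
    | top => simp at hle
    | coe n => norm_cast at hle ⊢; omega
  rw [Module.length_eq_zero_iff] at h0
  refine le_antisymm (fun x hx => ?_) hAB
  let y : LinearMap.ker g := ⟨Submodule.Quotient.mk ⟨x, hBC hx⟩, by
    change Submodule.Quotient.mk _ = _
    rw [Submodule.Quotient.mk_eq_zero]
    exact hx⟩
  have hy : (y : C ⧸ A.comap C.subtype) = 0 := congrArg Subtype.val (Subsingleton.elim y 0)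
  exact (Submodule.Quotient.mk_eq_zero (A.comap C.subtype)).1 hy

/-- Let `L` be a `τ`-stable lattice with `pL^∨ ⊂² L ⊂² L^∨`, and let
`D ∈ ℳ(𝔽)` satisfy `L ⊆ D`. Then `D = L`; in particular `D` is `τ`-stable. -/
theorem stratum_type1_is_point
    (p : ℕ) [Fact p.Prime] (hp : Odd p)
    (𝔽 : Type) [Field 𝔽] [IsAlgClosed 𝔽] [CharP 𝔽 p]
    (σ : Kp p 𝔽 ≃+* Kp p 𝔽) (hσ : IsWittFrobenius p 𝔽 σ)
    (L : Submodule (Wp p 𝔽) (N0 p 𝔽)) (hL : IsLattice p 𝔽 L)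
    (hτL : tauL p 𝔽 σ L = L)
    (h1 : SubD p 𝔽 2 ((p : Wp p 𝔽) • dualL p 𝔽 L) L)
    (h2 : SubD p 𝔽 2 L (dualL p 𝔽 L))
    (D : Submodule (Wp p 𝔽) (N0 p 𝔽)) (hD : memM p 𝔽 σ D) (hLD : L ≤ D) :
    D = L ∧ tauL p 𝔽 σ D = D := by
  have key : D = L := by
    obtain ⟨-, -, ⟨hDD, hlen⟩, -⟩ := hD
    refine eq_of_chain L D (dualL p 𝔽 D) (dualL p 𝔽 L) hLD hDD
      (fun x hx d hd => hx d (hLD hd)) ?_ ?_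
    · have := h2.2
      rw [relLength, ← Module.coe_length] at this
      exact WithBot.coe_injective this
    · rw [relLength, ← Module.coe_length] at hlen
      exact WithBot.coe_injective hlen
  exact ⟨key, by rw [key, hτL]⟩

end
end
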